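/- Let N ≥ 1 be a natural number. Define q_{2m+1}(x) = p_{2m+1}(x), q_{2m}(x) = m! Σ_{n=0}^{m} p_{2n}(x)/n!, and r_m = 2^{−2m−1} √π (2m+1)!, where p_k are the monic Hermite polynomials. Define S₄(x,y) = Σ_{m=0}^{N−1} (e^{−x²/2}/(2r_m))·(q_{2m}(x)·(d/dy)[e^{−y²/2} q_{2m+1}(y)] − q_{2m+1}(x)·(d/dy)[e^{−y²/2} q_{2m}(y)]). Then for all real x, y: S₄(x,y) = (1/2)·e^{−(x²+y²)/2} Σ_{l=0}^{2N−1} H_l(x)H_l(y)/(√π·2^l·l!) − (1/2)·(2^{2N−1}/(√π·(2N−1)!))·e^{−y²/2}·p_{2N}(y)·∫_x^{∞} e^{−t²/2}·p_{2N−1}(t) dt. -/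

import Mathlib

/-!
Write `φ_k = e^{-x²/2} p_k`, `Ψ_m = e^{-x²/2} q_{2m}` and `h_k = √π k! / 2^k`, so that
`r_m = h_{2m+1}`. The relations `φ_k' = (k/2) φ_{k-1} - φ_{k+1}` and
`Ψ_{m+1} = (m+1) Ψ_m + φ_{2m+2}` give `Ψ_m' = -φ_{2m+1}`, so that `Ψ_m` is the tail integral of
`φ_{2m+1}`. Since `h_{k+1} = (k+1)/2 · h_k`, the `m`-th summand of `2 S₄` equals
`b_{2m} + b_{2m+1} + T_m - T_{m+1}`, where `b_l = φ_l(x) φ_l(y) / h_l` and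
`T_m = (Ψ_m(x) - φ_{2m}(x)) φ_{2m}(y) / h_{2m}`. As `T_0 = 0`, only
`T_N = Ψ_{N-1}(x) φ_{2N}(y) / h_{2N-1}` survives the telescoping.
-/

open MeasureTheory Finset

/-- The physicists' Hermite polynomials. -/
noncomputable def hermiteH : ℕ → ℝ → ℝ
  | 0, _ => 1
  | 1, x => 2 * x
  | (n + 2), x => 2 * x * hermiteH (n + 1) x - 2 * (n + 1) * hermiteH n x

/-- The monic Hermite polynomials `p_k = 2^{−k} H_k`. -/
noncomputable def hermiteP (k : ℕ) (x : ℝ) : ℝ := hermiteH k x / 2 ^ k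

/-- `q_{2m+1} = p_{2m+1}`, `q_{2m} = m! Σ_{n=0}^m p_{2n}/n!`. -/
noncomputable def qGSE (j : ℕ) (x : ℝ) : ℝ :=
  if j % 2 = 1 then hermiteP j x
  else (Nat.factorial (j / 2)) *
    ∑ n ∈ range (j / 2 + 1), hermiteP (2 * n) x / (Nat.factorial n)

/-- The normalizations `r_m = 2^{−2m−1} √π (2m+1)!`. -/
noncomputable def rGSE (m : ℕ) : ℝ :=
  Real.sqrt Real.pi * (Nat.factorial (2 * m + 1)) / 2 ^ (2 * m + 1)

/-- The GSE kernel `S₄(x,y)`. -/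
noncomputable def S4GSE (N : ℕ) (x y : ℝ) : ℝ :=
  ∑ m ∈ range N, (Real.exp (-x ^ 2 / 2) / (2 * rGSE m)) *
    (qGSE (2 * m) x * deriv (fun t => Real.exp (-t ^ 2 / 2) * qGSE (2 * m + 1) t) y -
     qGSE (2 * m + 1) x * deriv (fun t => Real.exp (-t ^ 2 / 2) * qGSE (2 * m) t) y)

lemma integrable_exp_neg_mul_sq_mul_eval {b : ℝ} (hb : 0 < b) (P : Polynomial ℝ) :
    Integrable fun t : ℝ => Real.exp (-b * t ^ 2) * P.eval t := by
  simp only [Polynomial.eval_eq_sum_range, mul_sum]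
  refine integrable_finsetSum _ fun j _ => ?_
  have hj : (-1 : ℝ) < j := neg_one_lt_zero.trans_le j.cast_nonneg
  refine ((integrable_rpow_mul_exp_neg_mul_sq hb hj).const_mul (P.coeff j)).congr
    (.of_forall fun t => ?_)
  simp only [Real.rpow_natCast]
  ring

lemma hasDerivAt_exp_neg_sq_div_two (x : ℝ) :
    HasDerivAt (fun t : ℝ => Real.exp (-t ^ 2 / 2)) (-x * Real.exp (-x ^ 2 / 2)) x := by
  have h : HasDerivAt (fun t : ℝ => -t ^ 2 / 2) (-x) x :=
    ((hasDerivAt_pow 2 x).neg.div_const 2).congr_deriv (by simp; ring)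
  exact h.exp.congr_deriv (mul_comm _ _)

lemma hermiteP_zero (x : ℝ) : hermiteP 0 x = 1 := by
  simp [hermiteP, hermiteH]

-- At `k = 0` the truncated index `k - 1` is harmless because its coefficient vanishes.
lemma hermiteP_succ (k : ℕ) (x : ℝ) :
    hermiteP (k + 1) x = x * hermiteP k x - k / 2 * hermiteP (k - 1) x := by
  cases k with
  | zero => simp [hermiteP, hermiteH]
  | succ k =>
    simp only [hermiteP, hermiteH, pow_succ, Nat.add_sub_cancel]
    push_cast
    field_simp

lemma hasDerivAt_hermiteP (k : ℕ) (x : ℝ) :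
    HasDerivAt (hermiteP k) (k * hermiteP (k - 1) x) x := by
  induction k using Nat.twoStepInduction with
  | zero =>
    have h : hermiteP 0 = fun _ => 1 := funext hermiteP_zero
    simpa [h] using hasDerivAt_const x (1 : ℝ)
  | one =>
    have h : hermiteP 1 = id := funext fun t => by simp [hermiteP_succ 0, hermiteP_zero]
    simpa [h, hermiteP_zero] using hasDerivAt_id x
  | more k ih ih' =>
    have h := ((hasDerivAt_id x).mul ih').sub (ih.const_mul (((k + 1 : ℕ) : ℝ) / 2))
    refine (h.congr_of_eventuallyEq (.of_forall (hermiteP_succ (k + 1)))).congr_deriv ?_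
    simp only [Nat.add_sub_cancel, Nat.add_succ_sub_one, id]
    push_cast
    linear_combination -((k : ℝ) + 1) * hermiteP_succ k x

lemma exists_polynomial_eval_eq_hermiteP (k : ℕ) :
    ∃ P : Polynomial ℝ, ∀ x, P.eval x = hermiteP k x := by
  induction k using Nat.twoStepInduction with
  | zero => exact ⟨1, fun x => by simp [hermiteP_zero]⟩
  | one => exact ⟨.X, fun x => by simp [hermiteP_succ 0, hermiteP_zero]⟩
  | more k ih ih' =>
    obtain ⟨P, hP⟩ := ih
    obtain ⟨Q, hQ⟩ := ih'
    exact ⟨.X * Q - .C (((k + 1 : ℕ) : ℝ) / 2) * P, fun x => by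
      simp [hermiteP_succ (k + 1), hP, hQ]⟩

/-- The Hermite function `φ_k = e^{-x²/2} p_k`, not normalized in `L²`. -/
noncomputable def hermiteFun (k : ℕ) (x : ℝ) : ℝ := Real.exp (-x ^ 2 / 2) * hermiteP k x

lemma hasDerivAt_hermiteFun (k : ℕ) (x : ℝ) :
    HasDerivAt (hermiteFun k) (k / 2 * hermiteFun (k - 1) x - hermiteFun (k + 1) x) x := by
  refine ((hasDerivAt_exp_neg_sq_div_two x).mul (hasDerivAt_hermiteP k x)).congr_deriv ?_
  simp only [hermiteFun, hermiteP_succ k]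
  ring

lemma integrable_hermiteFun (k : ℕ) : Integrable (hermiteFun k) := by
  obtain ⟨P, hP⟩ := exists_polynomial_eval_eq_hermiteP k
  refine (integrable_exp_neg_mul_sq_mul_eval one_half_pos P).congr (.of_forall fun t => ?_)
  simp only [hP, hermiteFun]
  ring_nf

lemma exp_mul_qGSE_odd (m : ℕ) (x : ℝ) :
    Real.exp (-x ^ 2 / 2) * qGSE (2 * m + 1) x = hermiteFun (2 * m + 1) x := by
  simp [qGSE, hermiteFun, Nat.add_mod]

lemma qGSE_even_succ (m : ℕ) (x : ℝ) :
    qGSE (2 * (m + 1)) x = (m + 1) * qGSE (2 * m) x + hermiteP (2 * (m + 1)) x := by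
  have hm : (m.factorial : ℝ) ≠ 0 := by positivity
  simp only [qGSE, Nat.mul_mod_right, zero_ne_one, if_false, Nat.mul_div_cancel_left _ two_pos,
    sum_range_succ _ (m + 1), Nat.factorial_succ]
  push_cast
  field_simp

/-- The function `Ψ_m = e^{-x²/2} q_{2m}`, the even member of the `m`-th skew-orthogonal pair
multiplied by the square root of the Gaussian weight. -/
noncomputable def evenSkewFun (m : ℕ) (x : ℝ) : ℝ := Real.exp (-x ^ 2 / 2) * qGSE (2 * m) x

lemma evenSkewFun_zero : evenSkewFun 0 = hermiteFun 0 := by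
  ext x
  simp [evenSkewFun, hermiteFun, qGSE]

lemma evenSkewFun_succ (m : ℕ) :
    evenSkewFun (m + 1) = fun x => (m + 1) * evenSkewFun m x + hermiteFun (2 * (m + 1)) x := by
  ext x
  simp only [evenSkewFun, hermiteFun, qGSE_even_succ]
  ring

lemma hasDerivAt_evenSkewFun (m : ℕ) (x : ℝ) :
    HasDerivAt (evenSkewFun m) (-hermiteFun (2 * m + 1) x) x := by
  induction m with
  | zero => simpa [evenSkewFun_zero] using hasDerivAt_hermiteFun 0 x
  | succ m ih =>
    rw [evenSkewFun_succ]
    refine ((ih.const_mul _).add (hasDerivAt_hermiteFun (2 * (m + 1)) x)).congr_deriv ?_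
    rw [show 2 * (m + 1) - 1 = 2 * m + 1 by lia]
    push_cast
    ring

lemma integrable_evenSkewFun (m : ℕ) : Integrable (evenSkewFun m) := by
  induction m with
  | zero => exact evenSkewFun_zero ▸ integrable_hermiteFun 0
  | succ m ih =>
    exact evenSkewFun_succ m ▸ (ih.const_mul _).add (integrable_hermiteFun _)

lemma integral_Ioi_hermiteFun_odd (m : ℕ) (x : ℝ) :
    ∫ t in Set.Ioi x, hermiteFun (2 * m + 1) t = evenSkewFun m x := by
  have hderiv (t : ℝ) (_ : t ∈ Set.Ici x) :
      HasDerivAt (-evenSkewFun m) (hermiteFun (2 * m + 1) t) t := by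
    simpa using (hasDerivAt_evenSkewFun m t).neg
  have hint := (integrable_hermiteFun (2 * m + 1)).integrableOn (s := Set.Ioi x)
  have hlim := tendsto_zero_of_hasDerivAt_of_integrableOn_Ioi
    (fun t ht => hderiv t (Set.mem_Ici_of_Ioi ht)) hint
    (integrable_evenSkewFun m).neg.integrableOn
  simp [integral_Ioi_of_hasDerivAt_of_tendsto' hderiv hint hlim]

/-- The squared norm `h_k = √π k! / 2^k` of `p_k` in `L²(e^{-x²} dx)`, taken in closed form. -/
noncomputable def hermiteNormSq (k : ℕ) : ℝ := Real.sqrt Real.pi * k.factorial / 2 ^ k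

lemma hermiteNormSq_ne_zero (k : ℕ) : hermiteNormSq k ≠ 0 := by
  have := Real.pi_pos
  unfold hermiteNormSq
  positivity

lemma hermiteNormSq_succ (k : ℕ) :
    hermiteNormSq (k + 1) = (k + 1) / 2 * hermiteNormSq k := by
  simp only [hermiteNormSq, Nat.factorial_succ, pow_succ]
  push_cast
  ring

lemma exp_mul_hermiteH_mul_div (l : ℕ) (x y : ℝ) :
    Real.exp (-(x ^ 2 + y ^ 2) / 2) *
        (hermiteH l x * hermiteH l y / (Real.sqrt Real.pi * 2 ^ l * l.factorial)) =
      hermiteFun l x * hermiteFun l y / hermiteNormSq l := by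
  rw [show -(x ^ 2 + y ^ 2) / 2 = -x ^ 2 / 2 + -y ^ 2 / 2 by ring, Real.exp_add]
  simp only [hermiteFun, hermiteP, hermiteNormSq]
  field_simp

/-- The remainder `T_m(x, y) = (Ψ_m(x) - φ_{2m}(x)) φ_{2m}(y) / h_{2m}` by which twice the `m`-th
partial sum of the GSE kernel falls short of the Hermite kernel of order `2m`. -/
noncomputable def gseRemainder (m : ℕ) (x y : ℝ) : ℝ :=
  (evenSkewFun m x - hermiteFun (2 * m) x) * hermiteFun (2 * m) y / hermiteNormSq (2 * m)

lemma gseRemainder_zero (x y : ℝ) : gseRemainder 0 x y = 0 := by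
  simp [gseRemainder, evenSkewFun_zero]

lemma gseRemainder_succ (m : ℕ) (x y : ℝ) :
    gseRemainder (m + 1) x y =
      evenSkewFun m x * hermiteFun (2 * (m + 1)) y / hermiteNormSq (2 * m + 1) := by
  have hnorm : hermiteNormSq (2 * (m + 1)) = (m + 1) * hermiteNormSq (2 * m + 1) := by
    rw [mul_add_one, hermiteNormSq_succ]
    push_cast
    ring
  have hm : (m : ℝ) + 1 ≠ 0 := by positivity
  simp only [gseRemainder, evenSkewFun_succ, hnorm, add_sub_cancel_right]
  rw [mul_assoc, mul_div_mul_left _ _ hm]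

lemma evenSkewFun_mul_sub_eq (m : ℕ) (x y : ℝ) :
    evenSkewFun m x * (hermiteFun (2 * m) y / hermiteNormSq (2 * m) -
        hermiteFun (2 * (m + 1)) y / hermiteNormSq (2 * m + 1)) =
      hermiteFun (2 * m) x * hermiteFun (2 * m) y / hermiteNormSq (2 * m) +
        gseRemainder m x y - gseRemainder (m + 1) x y := by
  rw [gseRemainder_succ, gseRemainder]
  ring

lemma S4GSE_eq_sum_hermiteFun (N : ℕ) (x y : ℝ) :
    S4GSE N x y = 1 / 2 * ∑ m ∈ range N,
      (evenSkewFun m x * (hermiteFun (2 * m) y / hermiteNormSq (2 * m) -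
          hermiteFun (2 * (m + 1)) y / hermiteNormSq (2 * m + 1)) +
        hermiteFun (2 * m + 1) x * hermiteFun (2 * m + 1) y / hermiteNormSq (2 * m + 1)) := by
  rw [S4GSE, mul_sum]
  refine sum_congr rfl fun m _ => ?_
  have hr : rGSE m = hermiteNormSq (2 * m + 1) := rfl
  have hodd : deriv (fun t => Real.exp (-t ^ 2 / 2) * qGSE (2 * m + 1) t) y =
      (2 * m + 1) / 2 * hermiteFun (2 * m) y - hermiteFun (2 * (m + 1)) y := by
    rw [funext (exp_mul_qGSE_odd m), (hasDerivAt_hermiteFun (2 * m + 1) y).deriv]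
    push_cast
    rfl
  have heven : deriv (fun t => Real.exp (-t ^ 2 / 2) * qGSE (2 * m) t) y =
      -hermiteFun (2 * m + 1) y := (hasDerivAt_evenSkewFun m y).deriv
  have hnorm : (2 * m + 1) / 2 / hermiteNormSq (2 * m + 1) = 1 / hermiteNormSq (2 * m) := by
    have hm : (2 * (m : ℝ) + 1) / 2 ≠ 0 := by positivity
    rw [hermiteNormSq_succ, Nat.cast_mul, Nat.cast_two, div_mul_cancel_left₀ hm, one_div]
  rw [hr, hodd, heven, ← exp_mul_qGSE_odd m x, evenSkewFun]
  linear_combination Real.exp (-x ^ 2 / 2) * qGSE (2 * m) x * hermiteFun (2 * m) y / 2 * hnorm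

lemma S4GSE_eq_sum_sub_gseRemainder (N : ℕ) (x y : ℝ) :
    S4GSE N x y =
      1 / 2 * (∑ l ∈ range (2 * N), hermiteFun l x * hermiteFun l y / hermiteNormSq l -
        gseRemainder N x y) := by
  rw [S4GSE_eq_sum_hermiteFun]
  congr 1
  induction N with
  | zero => simp [gseRemainder_zero]
  | succ N ih =>
    rw [sum_range_succ, ih, evenSkewFun_mul_sub_eq, mul_add_one, sum_range_succ, sum_range_succ]
    ring

/-- Closed-form summation of the GSE kernel `S₄(x,y)`. -/
theorem gse_kernel_summation (N : ℕ) (hN : 1 ≤ N) (x y : ℝ) :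
    S4GSE N x y
      = (1 / 2) * Real.exp (-(x ^ 2 + y ^ 2) / 2) *
          ∑ l ∈ range (2 * N),
            hermiteH l x * hermiteH l y / (Real.sqrt Real.pi * 2 ^ l * (Nat.factorial l))
        - (1 / 2) * (2 ^ (2 * N - 1) / (Real.sqrt Real.pi * (Nat.factorial (2 * N - 1)))) *
            Real.exp (-y ^ 2 / 2) * hermiteP (2 * N) y *
            ∫ t in Set.Ioi x, Real.exp (-t ^ 2 / 2) * hermiteP (2 * N - 1) t := by
  obtain ⟨M, rfl⟩ := Nat.exists_eq_add_of_le' hN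
  have hodd : 2 * (M + 1) - 1 = 2 * M + 1 := by lia
  rw [S4GSE_eq_sum_sub_gseRemainder, gseRemainder_succ, ← integral_Ioi_hermiteFun_odd, hodd,
    mul_assoc (1 / 2) (Real.exp _), mul_sum]
  simp only [exp_mul_hermiteH_mul_div]
  simp only [hermiteFun, hermiteNormSq, div_div_eq_mul_div]
  ring
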